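/- For every dimension d ≥ 1 and every M > 0 there exists a constant C > 0, depending only on d and M, such that the following holds: for every μ ∈ ℝ^d, every η > 0, and every symmetric positive definite matrix Σ ∈ ℝ^{d×d} with ‖Σ‖_op ≤ M and η‖Σ‖_op ≤ 1/6, if ξ is a random vector with the Gaussian distribution N(μ, ηΣ), then E[ e^{|ξ|} · 1_{{|ξ−μ| ≥ 1/3}} ] ≤ C η e^{|μ|}. -/

import Mathlib

open MeasureTheory Real
open scoped RealInnerProductSpace

/-- The operator (spectral) norm of a real matrix, viewed as a linear map on
Euclidean space. -/
noncomputable def matOpNorm {d : ℕ} (A : Matrix (Fin d) (Fin d) ℝ) : ℝ :=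
  ‖LinearMap.toContinuousLinearMap (Matrix.toEuclideanLin A)‖

/-- The Gaussian measure on `ℝ^d` with mean `μ` and (positive definite) covariance
matrix `Γ`, defined through its density with respect to Lebesgue measure. -/
noncomputable def gaussianMeasure {d : ℕ} (μ : EuclideanSpace ℝ (Fin d))
    (Γ : Matrix (Fin d) (Fin d) ℝ) : Measure (EuclideanSpace ℝ (Fin d)) :=
  volume.withDensity fun x =>
    ENNReal.ofReal (Real.sqrt (((2 * π) ^ d * Γ.det))⁻¹ *
      Real.exp (-⟪x - μ, Matrix.toEuclideanLin Γ⁻¹ (x - μ)⟫ / 2))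

/-!
On the tail `ρ ≤ ‖x - μ‖` the Gaussian density of covariance `A` is a small multiple of the one of
covariance `2 • A`: it equals `√(2 ^ d) * exp (-q / 4)` times the latter, where
`q = ⟪x - μ, A⁻¹ (x - μ)⟫ ≥ ‖x - μ‖² / ‖A‖`. Half of this decay absorbs `exp ‖x - μ‖` at the price
of a factor `exp (2 ‖A‖)`, and the other half is at most `exp (-ρ² / (8 ‖A‖)) ≤ 8 ‖A‖ / ρ²`. Since
the density of covariance `2 • A` integrates to one, for bounded `‖A‖` the tail expectation of
`exp ‖x‖` is `O(‖A‖ exp ‖μ‖)`.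
-/

section QuadraticForm

theorem norm_apply_sq_le_opNorm_mul_re_inner {𝕜 E : Type*} [RCLike 𝕜] [NormedAddCommGroup E]
    [InnerProductSpace 𝕜 E] {T : E →L[𝕜] E} (hT : T.IsPositive) (w : E) :
    ‖T w‖ ^ 2 ≤ ‖T‖ * RCLike.re (inner 𝕜 (T w) w) := by
  rcases (norm_nonneg T).eq_or_lt with h0 | hpos
  · simp [norm_eq_zero.1 h0.symm]
  have htest := hT.re_inner_nonneg_left ((‖T‖ : 𝕜) • w - T w)
  have hexpand : RCLike.re (inner 𝕜 (T ((‖T‖ : 𝕜) • w - T w)) ((‖T‖ : 𝕜) • w - T w)) =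
      ‖T‖ ^ 2 * RCLike.re (inner 𝕜 (T w) w) - 2 * (‖T‖ * ‖T w‖ ^ 2) +
        RCLike.re (inner 𝕜 (T (T w)) (T w)) := by
    simp only [map_sub, map_smul, inner_sub_left, inner_sub_right, inner_smul_left,
      inner_smul_right, RCLike.conj_ofReal, RCLike.re_ofReal_mul,
      hT.inner_left_eq_inner_right (T w) w, inner_self_eq_norm_sq]
    ring
  have hTT : RCLike.re (inner 𝕜 (T (T w)) (T w)) ≤ ‖T‖ * ‖T w‖ ^ 2 :=
    calc RCLike.re (inner 𝕜 (T (T w)) (T w)) ≤ ‖T (T w)‖ * ‖T w‖ := re_inner_le_norm _ _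
      _ ≤ ‖T‖ * ‖T w‖ * ‖T w‖ := by gcongr; exact T.le_opNorm _
      _ = ‖T‖ * ‖T w‖ ^ 2 := by ring
  refine le_of_mul_le_mul_left ?_ hpos
  linarith

theorem toEuclideanLin_apply_inv_apply {ι : Type*} [Fintype ι] [DecidableEq ι]
    {A : Matrix ι ι ℝ} (hA : IsUnit A.det) (v : EuclideanSpace ℝ ι) :
    A.toEuclideanLin (A⁻¹.toEuclideanLin v) = v := by
  rw [← LinearMap.comp_apply, ← Matrix.toLpLin_mul, Matrix.mul_nonsing_inv _ hA]
  simp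

theorem norm_sq_le_matOpNorm_mul_inner_inv {d : ℕ} {A : Matrix (Fin d) (Fin d) ℝ}
    (hA : A.PosDef) (v : EuclideanSpace ℝ (Fin d)) :
    ‖v‖ ^ 2 ≤ matOpNorm A * ⟪v, A⁻¹.toEuclideanLin v⟫ := by
  have hpos : (LinearMap.toContinuousLinearMap A.toEuclideanLin).IsPositive :=
    (LinearMap.isPositive_toContinuousLinearMap_iff _).2
      (Matrix.isPositive_toEuclideanLin_iff.2 hA.posSemidef)
  simpa [matOpNorm, toEuclideanLin_apply_inv_apply hA.det_pos.ne'.isUnit] using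
    norm_apply_sq_le_opNorm_mul_re_inner hpos (A⁻¹.toEuclideanLin v)

theorem matOpNorm_nonneg {d : ℕ} (A : Matrix (Fin d) (Fin d) ℝ) : 0 ≤ matOpNorm A :=
  norm_nonneg _

theorem matOpNorm_smul {d : ℕ} (c : ℝ) (A : Matrix (Fin d) (Fin d) ℝ) :
    matOpNorm (c • A) = |c| * matOpNorm A := by
  simp [matOpNorm, norm_smul]

end QuadraticForm

section GaussianIntegral

theorem integral_comp_linearMap {E F : Type*} [NormedAddCommGroup E] [NormedSpace ℝ E]
    [FiniteDimensional ℝ E] [MeasurableSpace E] [BorelSpace E] [NormedAddCommGroup F]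
    [NormedSpace ℝ F] (ν : Measure E) [ν.IsAddHaarMeasure] {T : E →ₗ[ℝ] E}
    (hT : LinearMap.det T ≠ 0) (f : E → F) :
    ∫ x, f (T x) ∂ν = |(LinearMap.det T)⁻¹| • ∫ x, f x ∂ν := by
  have hemb : MeasurableEmbedding T :=
    (T.equivOfDetNeZero hT).toContinuousLinearEquiv.toHomeomorph.measurableEmbedding
  rw [← hemb.integral_map, Measure.map_linearMap_addHaar_eq_smul_addHaar ν hT,
    integral_smul_measure, ENNReal.toReal_ofReal (abs_nonneg _)]

theorem integral_exp_neg_mul_inner_toEuclideanLin {ι : Type*} [Fintype ι] [DecidableEq ι]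
    {P : Matrix ι ι ℝ} (hP : P.PosDef) {b : ℝ} (hb : 0 < b) :
    ∫ v : EuclideanSpace ℝ ι, Real.exp (-b * ⟪v, P.toEuclideanLin v⟫) =
      (√P.det)⁻¹ * (π / b) ^ ((Fintype.card ι : ℝ) / 2) := by
  obtain ⟨B, hB⟩ : ∃ B : Matrix ι ι ℝ, P = B.conjTranspose * B := by
    open scoped MatrixOrder in
    exact CStarAlgebra.nonneg_iff_eq_star_mul_self.1 hP.posSemidef.nonneg
  have hform (v : EuclideanSpace ℝ ι) : ⟪v, P.toEuclideanLin v⟫ = ‖B.toEuclideanLin v‖ ^ 2 := by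
    rw [hB, Matrix.toLpLin_mul_same, LinearMap.comp_apply,
      Matrix.toEuclideanLin_conjTranspose_eq_adjoint, LinearMap.adjoint_inner_right,
      real_inner_self_eq_norm_sq]
  have hdet : P.det = LinearMap.det B.toEuclideanLin ^ 2 := by
    rw [Matrix.toEuclideanLin_eq_toLin_orthonormal, LinearMap.det_toLin, hB, Matrix.det_mul,
      Matrix.det_conjTranspose, star_trivial, sq]
  have hdet_ne : LinearMap.det B.toEuclideanLin ≠ 0 := by
    rw [← sq_pos_iff, ← hdet]
    exact hP.det_pos
  simp_rw [hform]
  rw [integral_comp_linearMap volume hdet_ne fun w => Real.exp (-b * ‖w‖ ^ 2),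
    GaussianFourier.integral_rexp_neg_mul_sq_norm hb, finrank_euclideanSpace, abs_inv, hdet,
    Real.sqrt_sq_eq_abs, smul_eq_mul]

end GaussianIntegral

section GaussianDensity

/-- The density of the Gaussian measure `gaussianMeasure μ A` with respect to Lebesgue measure,
as a real-valued function. -/
noncomputable def gaussianDensity {d : ℕ} (μ : EuclideanSpace ℝ (Fin d))
    (A : Matrix (Fin d) (Fin d) ℝ) (x : EuclideanSpace ℝ (Fin d)) : ℝ :=
  √((2 * π) ^ d * A.det)⁻¹ * Real.exp (-⟪x - μ, A⁻¹.toEuclideanLin (x - μ)⟫ / 2)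

variable {d : ℕ} {A : Matrix (Fin d) (Fin d) ℝ} (μ : EuclideanSpace ℝ (Fin d))

theorem gaussianDensity_nonneg (A : Matrix (Fin d) (Fin d) ℝ) (x : EuclideanSpace ℝ (Fin d)) :
    0 ≤ gaussianDensity μ A x := by
  unfold gaussianDensity
  positivity

theorem continuous_gaussianDensity (A : Matrix (Fin d) (Fin d) ℝ) :
    Continuous (gaussianDensity μ A) := by
  have hlin : Continuous A⁻¹.toEuclideanLin := LinearMap.continuous_of_finiteDimensional _
  unfold gaussianDensity
  fun_prop

theorem integral_gaussianDensity (hA : A.PosDef) : ∫ x, gaussianDensity μ A x = 1 := by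
  have hdet := hA.det_pos
  have hsqrt : √((2 * π) ^ d) = (2 * π) ^ ((d : ℝ) / 2) := by
    rw [Real.sqrt_eq_rpow, ← Real.rpow_natCast_mul (by positivity), mul_one_div]
  simp only [gaussianDensity]
  rw [integral_const_mul, integral_sub_right_eq_self
    (fun v => Real.exp (-⟪v, A⁻¹.toEuclideanLin v⟫ / 2)) μ]
  calc √((2 * π) ^ d * A.det)⁻¹ * ∫ v, Real.exp (-⟪v, A⁻¹.toEuclideanLin v⟫ / 2)
      = √((2 * π) ^ d * A.det)⁻¹ *
          ∫ v, Real.exp (-(1 / 2) * ⟪v, A⁻¹.toEuclideanLin v⟫) := by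
        congr! 4
        ring
    _ = (√((2 * π) ^ d) * √A.det)⁻¹ * (√A.det * √((2 * π) ^ d)) := by
        rw [integral_exp_neg_mul_inner_toEuclideanLin hA.inv one_half_pos, Fintype.card_fin,
          Matrix.det_nonsing_inv, Ring.inverse_eq_inv', Real.sqrt_inv, Real.sqrt_inv, inv_inv,
          Real.sqrt_mul (by positivity), hsqrt, div_div_eq_mul_div, div_one, mul_comm π]
    _ = 1 := by field_simp

theorem integrable_gaussianDensity (hA : A.PosDef) : Integrable (gaussianDensity μ A) :=
  .of_integral_ne_zero (by simp [integral_gaussianDensity μ hA])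

theorem gaussianDensity_eq_mul_gaussianDensity_smul (hA : IsUnit A.det) {c : ℝ} (hc : 0 < c)
    (x : EuclideanSpace ℝ (Fin d)) :
    gaussianDensity μ A x =
      √(c ^ d) * Real.exp (-((1 - c⁻¹) / 2) * ⟪x - μ, A⁻¹.toEuclideanLin (x - μ)⟫) *
        gaussianDensity μ (c • A) x := by
  have hinv : (c • A)⁻¹ = c⁻¹ • A⁻¹ := Matrix.inv_smul' A (Units.mk0 c hc.ne') hA
  have hconst : √((2 * π) ^ d * A.det)⁻¹ = √(c ^ d) * √((2 * π) ^ d * (c • A).det)⁻¹ := by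
    rw [← Real.sqrt_mul (by positivity), Matrix.det_smul, Fintype.card_fin]
    congr 1
    field_simp
  simp only [gaussianDensity, hconst, hinv, map_smul, LinearMap.smul_apply, real_inner_smul_right]
  set q := ⟪x - μ, A⁻¹.toEuclideanLin (x - μ)⟫
  rw [show -q / 2 = -((1 - c⁻¹) / 2) * q + -(c⁻¹ * q) / 2 by ring, Real.exp_add]
  ring

theorem setIntegral_gaussianMeasure {F : Type*} [NormedAddCommGroup F] [NormedSpace ℝ F]
    (A : Matrix (Fin d) (Fin d) ℝ) {s : Set (EuclideanSpace ℝ (Fin d))} (hs : MeasurableSet s)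
    (f : EuclideanSpace ℝ (Fin d) → F) :
    ∫ x in s, f x ∂(gaussianMeasure μ A) = ∫ x in s, gaussianDensity μ A x • f x := by
  have hmeas : Measurable fun x => ENNReal.ofReal (gaussianDensity μ A x) :=
    (continuous_gaussianDensity μ A).measurable.ennreal_ofReal
  refine (setIntegral_withDensity_eq_setIntegral_toReal_smul hmeas
    (.of_forall fun _ => ENNReal.ofReal_lt_top) f hs).trans ?_
  simp only [ENNReal.toReal_ofReal (gaussianDensity_nonneg μ A _)]

end GaussianDensity

section Tail

theorem exp_sub_div_four_le {ρ r s q : ℝ} (hρ : 0 < ρ) (hρr : ρ ≤ r) (hs : 0 ≤ s)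
    (hrq : r ^ 2 ≤ s * q) : Real.exp (r - q / 4) ≤ 8 / ρ ^ 2 * Real.exp (2 * s) * s := by
  have hsq : ρ ^ 2 ≤ s * q := (pow_le_pow_left₀ hρ.le hρr 2).trans hrq
  have hs_pos : 0 < s := hs.lt_of_ne' fun h => by simp [h, hρ.ne'] at hsq
  have hamgm : r ≤ 2 * s + q / 8 := by
    refine le_of_mul_le_mul_left ?_ hs_pos
    linarith [sq_nonneg (r - 4 * s)]
  have hq : (8 / ρ ^ 2 * s)⁻¹ ≤ q / 8 := by
    rw [inv_le_iff_one_le_mul₀ (by positivity)]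
    field_simp
    linarith
  have hdecay : Real.exp (-(q / 8)) ≤ 8 / ρ ^ 2 * s := by
    rw [Real.exp_neg]
    refine inv_le_of_inv_le₀ (by positivity) (hq.trans ?_)
    linarith [Real.add_one_le_exp (q / 8)]
  calc Real.exp (r - q / 4) ≤ Real.exp (2 * s + -(q / 8)) := Real.exp_le_exp.2 (by linarith)
    _ = Real.exp (2 * s) * Real.exp (-(q / 8)) := Real.exp_add _ _
    _ ≤ Real.exp (2 * s) * (8 / ρ ^ 2 * s) := by gcongr
    _ = 8 / ρ ^ 2 * Real.exp (2 * s) * s := by ring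

variable {d : ℕ} {A : Matrix (Fin d) (Fin d) ℝ} {ρ : ℝ}

theorem gaussianDensity_mul_exp_norm_le (hA : A.PosDef) (hρ : 0 < ρ)
    {μ x : EuclideanSpace ℝ (Fin d)} (hx : ρ ≤ ‖x - μ‖) :
    gaussianDensity μ A x * Real.exp ‖x‖ ≤
      √(2 ^ d) * (8 / ρ ^ 2 * Real.exp (2 * matOpNorm A) * matOpNorm A) * Real.exp ‖μ‖ *
        gaussianDensity μ ((2 : ℝ) • A) x := by
  have htail := exp_sub_div_four_le hρ hx (matOpNorm_nonneg A)
    (norm_sq_le_matOpNorm_mul_inner_inv hA (x - μ))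
  have hdensity := gaussianDensity_eq_mul_gaussianDensity_smul μ hA.det_pos.ne'.isUnit two_pos x
  set q := ⟪x - μ, A⁻¹.toEuclideanLin (x - μ)⟫
  have hnonneg := gaussianDensity_nonneg μ ((2 : ℝ) • A) x
  have hnorm : ‖x‖ ≤ ‖μ‖ + ‖x - μ‖ := norm_le_norm_add_norm_sub' x μ
  calc gaussianDensity μ A x * Real.exp ‖x‖
      = √(2 ^ d) * Real.exp (‖x‖ - q / 4) * gaussianDensity μ ((2 : ℝ) • A) x := by
        rw [hdensity, show ‖x‖ - q / 4 = -((1 - 2⁻¹) / 2) * q + ‖x‖ by ring, Real.exp_add]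
        ring
    _ ≤ √(2 ^ d) * Real.exp (‖x - μ‖ - q / 4 + ‖μ‖) * gaussianDensity μ ((2 : ℝ) • A) x := by
        gcongr
        linarith
    _ = √(2 ^ d) * Real.exp (‖x - μ‖ - q / 4) * Real.exp ‖μ‖ *
          gaussianDensity μ ((2 : ℝ) • A) x := by
        rw [Real.exp_add]
        ring
    _ ≤ _ := by gcongr

theorem setIntegral_exp_norm_gaussianMeasure_le (hA : A.PosDef) (hρ : 0 < ρ)
    (μ : EuclideanSpace ℝ (Fin d)) :
    ∫ x in {y : EuclideanSpace ℝ (Fin d) | ρ ≤ ‖y - μ‖}, Real.exp ‖x‖ ∂(gaussianMeasure μ A) ≤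
      √(2 ^ d) * (8 / ρ ^ 2 * Real.exp (2 * matOpNorm A) * matOpNorm A) * Real.exp ‖μ‖ := by
  set K := √(2 ^ d) * (8 / ρ ^ 2 * Real.exp (2 * matOpNorm A) * matOpNorm A) * Real.exp ‖μ‖
  have hK : 0 ≤ K := by
    have := matOpNorm_nonneg A
    positivity
  have hA_two : ((2 : ℝ) • A).PosDef := hA.smul two_pos
  have htail : MeasurableSet {y : EuclideanSpace ℝ (Fin d) | ρ ≤ ‖y - μ‖} :=
    measurableSet_le (by fun_prop) (by fun_prop)
  have hint : Integrable fun x => K * gaussianDensity μ ((2 : ℝ) • A) x :=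
    (integrable_gaussianDensity μ hA_two).const_mul K
  rw [setIntegral_gaussianMeasure μ A htail]
  calc ∫ x in {y : EuclideanSpace ℝ (Fin d) | ρ ≤ ‖y - μ‖}, gaussianDensity μ A x • Real.exp ‖x‖
      ≤ ∫ x in {y : EuclideanSpace ℝ (Fin d) | ρ ≤ ‖y - μ‖},
          K * gaussianDensity μ ((2 : ℝ) • A) x := by
        refine integral_mono_of_nonneg
          (.of_forall fun x => mul_nonneg (gaussianDensity_nonneg μ A x) (Real.exp_nonneg _))
          hint.integrableOn ?_
        filter_upwards [ae_restrict_mem htail] with x hx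
        exact gaussianDensity_mul_exp_norm_le hA hρ hx
    _ ≤ ∫ x, K * gaussianDensity μ ((2 : ℝ) • A) x :=
        setIntegral_le_integral hint
          (.of_forall fun x => mul_nonneg hK (gaussianDensity_nonneg μ _ x))
    _ = K := by rw [integral_const_mul, integral_gaussianDensity μ hA_two, mul_one]

end Tail

theorem stmt0_general (d : ℕ) {ρ : ℝ} (hρ : 0 < ρ) (κ : ℝ) :
    ∃ C > 0, ∀ (μ : EuclideanSpace ℝ (Fin d)) (η : ℝ) (Γ : Matrix (Fin d) (Fin d) ℝ),
      0 < η → Γ.PosDef → η * matOpNorm Γ ≤ κ →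
      ∫ x in {y : EuclideanSpace ℝ (Fin d) | ρ ≤ ‖y - μ‖},
          Real.exp ‖x‖ ∂(gaussianMeasure μ (η • Γ)) ≤
        C * (η * matOpNorm Γ) * Real.exp ‖μ‖ := by
  refine ⟨√(2 ^ d) * (8 / ρ ^ 2 * Real.exp (2 * κ)), by positivity, fun μ η Γ hη hΓ hκ => ?_⟩
  have hnorm : matOpNorm (η • Γ) = η * matOpNorm Γ := by rw [matOpNorm_smul, abs_of_pos hη]
  have hnonneg : 0 ≤ η * matOpNorm Γ := mul_nonneg hη.le (matOpNorm_nonneg Γ)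
  refine (setIntegral_exp_norm_gaussianMeasure_le (hΓ.smul hη) hρ μ).trans ?_
  rw [hnorm, ← mul_assoc √(2 ^ d)]
  gcongr

theorem stmt0 (d : ℕ) (hd : 1 ≤ d) (M : ℝ) (hM : 0 < M) :
    ∃ C > 0, ∀ (μ : EuclideanSpace ℝ (Fin d)) (η : ℝ) (Γ : Matrix (Fin d) (Fin d) ℝ),
      0 < η → Γ.IsSymm → Γ.PosDef → matOpNorm Γ ≤ M → η * matOpNorm Γ ≤ 1 / 6 →
      ∫ x in {y : EuclideanSpace ℝ (Fin d) | 1 / 3 ≤ ‖y - μ‖},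
          Real.exp ‖x‖ ∂(gaussianMeasure μ (η • Γ)) ≤ C * η * Real.exp ‖μ‖ := by
  obtain ⟨C, hC, h⟩ := stmt0_general d (ρ := 1 / 3) (by norm_num) (1 / 6)
  refine ⟨C * M, by positivity, fun μ η Γ hη _ hΓ hΓM hηΓ => (h μ η Γ hη hΓ hηΓ).trans ?_⟩
  rw [mul_assoc C M, mul_comm M]
  gcongr
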